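/- For each ordinal α < ε₀ there is a natural number N such that for all n ≥ N, F^⋄_{ε₀+α}(F_{ε₀}(n ∸ 1)) ≤ F_{ε₀}(n), where ∸ is truncated subtraction on ℕ. -/

import Mathlib

/-!
The slow hierarchy is a fast-growing hierarchy whose ground function `F^⋄_{ε₀}` takes at `x` the
value `F_{ω_{k+1}}(x)`, where `k = F_{ε₀}^{-1}(x)`. For `x < F_{ε₀}(n)` one has `k + 1 ≤ n`, so
`F^⋄_{ε₀}(x) ≤ F_{ω_n}(x)` below `F_{ε₀}(n)`. Induction on `α` (`slowF_le`) turns this into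
`F^⋄_{ε₀+α}(x) ≤ F_{ω_n+α}(x)` whenever `α ≤ ω_n` and the right-hand side is at most `F_{ε₀}(n)`;
here one uses that `{ω_n + α}(x) = ω_n + {α}(x)`, the Cantor normal forms being concatenated.

It remains to bound `F_{ω_n+α}(F_{ε₀}(n-1))`. Since `F_{ε₀}(n-1) = F_{ω_n}(n-1) ≤ F_{ω_n+α}(n)`,
it is at most two iterations of `F_{ω_n+α}` at `n`, hence at most `F_{ω_n+α+1}(n)`, and this is at
most `F_{ω_{n+1}}(n) = F_{ε₀}(n)` provided `ω_{n+1} →_n ω_n + α + 1` in the step-down relation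
(`fgh_le_of_stepDown`). For large `n` the latter holds because `ω_{n+1} →_n ω_n + ω_n` for `n ≥ 1`
and `ω_n →_n α + 1` for large `n` (`exists_stepDown_omegaTower_add`).

The facts about `→_n` rest on the normal form `ω^γ * b + ω^γ` of a nonzero ordinal
(`exists_cnf`), for which `fundSeq` is computed in `fundSeq_opow_succ` and `fundSeq_opow_limit`, and
on the Bachmann property `{a}(x+1) →_n {a}(x)` (`stepDown_fundSeq_succ`), which also makes the
functions `F_a` monotone (`fgh_mono`).
-/

open Ordinal
open scoped Classical

noncomputable section

/-- `omegaTower m α` is `ω_m^α`: the `m`-fold iterated `ω`-power tower on top of `α`. -/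
noncomputable def omegaTower : ℕ → Ordinal.{0} → Ordinal.{0}
  | 0, α => α
  | m + 1, α => omega0 ^ (omegaTower m α)

/-- `ε₀`, the least ordinal `ε` with `ω ^ ε = ε`. -/
noncomputable def eps0 : Ordinal.{0} := Ordinal.nfp (fun a => omega0 ^ a) 0

/-- The fundamental sequence `{α}(n)` for ordinals below `ε₀`:
`{0}(n) = 0`, `{β+1}(n) = β`, and for a limit `α = β + ω^γ·(k+1)` (with `γ > 0` the least
exponent of the Cantor normal form) we set `{α}(n) = β + ω^γ·k + ω^δ·(n+1)` if `γ = δ+1`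
and `{α}(n) = β + ω^γ·k + ω^{{γ}(n)}` if `γ` is a limit.  Here `γ` is recovered as the
largest exponent with `ω^γ ∣ α`, and `β + ω^γ·k = ω^γ · pred (α / ω^γ)`. -/
noncomputable def fundSeq (α : Ordinal.{0}) (n : ℕ) : Ordinal.{0} :=
  if _h0 : α = 0 then 0
  else if hs : ∃ β, α = β + 1 then Classical.choose hs
  else
    let γ : Ordinal := sSup {c : Ordinal | omega0 ^ c ∣ α}
    if hγ : ∃ δ, γ = δ + 1 then
      omega0 ^ γ * Ordinal.pred (α / omega0 ^ γ) +
        omega0 ^ (Classical.choose hγ) * ((n : Ordinal) + 1)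
    else if hlt : γ < α then
      omega0 ^ γ * Ordinal.pred (α / omega0 ^ γ) + omega0 ^ (fundSeq γ n)
    else 0
termination_by α
decreasing_by exact hlt

/-- The step-down relation `β →_n γ`: there is a finite sequence from `β` to `γ`
each step of which descends to the `n`-th member of the fundamental sequence. -/
def stepDown (n : ℕ) (β γ : Ordinal.{0}) : Prop :=
  Relation.ReflTransGen (fun a b => fundSeq a n = b) β γ

/-- The fast-growing hierarchy `F_α` for `α < ε₀`:
`F_0(x) = x+1`, `F_{α+1}(x) = F_α^[x+1](x)`, `F_λ(x) = F_{{λ}(x)}(x)` for limits. -/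
noncomputable def fgh (α : Ordinal.{0}) : ℕ → ℕ :=
  if _h0 : α = 0 then fun x => x + 1
  else if hs : ∃ β, α = β + 1 then fun x => (fgh (Classical.choose hs))^[x + 1] x
  else fun x => if hlt : fundSeq α x < α then fgh (fundSeq α x) x else 0
termination_by α
decreasing_by
  · calc Classical.choose hs < Classical.choose hs + 1 := by
          rw [Ordinal.add_one_eq_succ]; exact Order.lt_succ _
      _ = α := (Classical.choose_spec hs).symm
  · exact hlt

/-- `F_{ε₀}(x) := F_{ω_{x+1}}(x)`. -/
noncomputable def Feps0 (x : ℕ) : ℕ := fgh (omegaTower (x + 1) 1) x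

/-- The inverse `F_{ε₀}^{-1}(x) := max({z ≤ x : F_{ε₀}(z) ≤ x} ∪ {0})`. -/
noncomputable def Feps0Inv (x : ℕ) : ℕ :=
  sSup ({z : ℕ | z ≤ x ∧ Feps0 z ≤ x} ∪ {0})

/-- The slow function `F^⋄_{ε₀}(x) := F_{ω_{F_{ε₀}^{-1}(x)+1}}(x)`. -/
noncomputable def slowFeps0 (x : ℕ) : ℕ := fgh (omegaTower (Feps0Inv x + 1) 1) x

/-- The slow hierarchy `F^⋄_{ε₀+α}` for `α < ε₀`:
`F^⋄_{ε₀+0} = F^⋄_{ε₀}`, `F^⋄_{ε₀+α+1}(n) = (F^⋄_{ε₀+α})^[n+1](n)`, and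
`F^⋄_{ε₀+λ}(n) = F^⋄_{ε₀+{λ}(n)}(n)` for limits `λ`. -/
noncomputable def slowF (α : Ordinal.{0}) : ℕ → ℕ :=
  if _h0 : α = 0 then slowFeps0
  else if hs : ∃ β, α = β + 1 then fun n => (slowF (Classical.choose hs))^[n + 1] n
  else fun n => if hlt : fundSeq α n < α then slowF (fundSeq α n) n else 0
termination_by α
decreasing_by
  · calc Classical.choose hs < Classical.choose hs + 1 := by
          rw [Ordinal.add_one_eq_succ]; exact Order.lt_succ _
      _ = α := (Classical.choose_spec hs).symm
  · exact hlt

/-- A nonempty finite set of naturals is *large* if its cardinality is at least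
its minimum. -/
def IsLargeSet (Y : Finset ℕ) : Prop := ∃ hY : Y.Nonempty, Y.min' hY ≤ Y.card

/-- The Paris–Harrington statement `PH(k, m, n, N)`: every `k`-colouring of the
`n`-element subsets of `{0, …, N-1}` admits a large homogeneous set with at least
`m` elements. -/
def PH (k m n N : ℕ) : Prop :=
  ∀ f : Finset ℕ → Fin k,
    ∃ Y : Finset ℕ, Y ⊆ Finset.range N ∧ m ≤ Y.card ∧ IsLargeSet Y ∧
      ∀ s t : Finset ℕ, s ⊆ Y → t ⊆ Y → s.card = n → t.card = n → f s = f t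

/-- `σ(n, k)`: the least `N` such that every `k`-colouring of the `n`-element subsets of
`{0, …, N-1}` admits a large homogeneous set with at least `n+1` elements. -/
noncomputable def sigmaPH (n k : ℕ) : ℕ := sInf {N | PH k (n + 1) n N}

/-! ### Ordinals below `ε₀` -/

lemma omega_opow_eps0 : omega0 ^ eps0 = eps0 :=
  nfp_fp (isNormal_opow one_lt_omega0) 0

lemma opow_lt_eps0 {a : Ordinal.{0}} (h : a < eps0) : omega0 ^ a < eps0 := by
  rw [← omega_opow_eps0]
  exact (opow_lt_opow_iff_right one_lt_omega0).2 h

lemma add_lt_eps0 {a b : Ordinal.{0}} (ha : a < eps0) (hb : b < eps0) : a + b < eps0 := by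
  rw [← omega_opow_eps0] at *
  exact isPrincipal_add_omega0_opow _ ha hb

/-- `ε₀` is the least fixed point of `a ↦ ω ^ a`, so nothing below it is one. -/
lemma lt_opow_self {a : Ordinal.{0}} (h : a < eps0) : a < omega0 ^ a := by
  by_contra hn
  exact absurd (nfp_le_fp (isNormal_opow one_lt_omega0).strictMono.monotone
    (zero_le (a := a)) (not_lt.1 hn)) (not_le.2 h)

lemma le_opow_self (a : Ordinal.{0}) : a ≤ omega0 ^ a := right_le_opow a one_lt_omega0

lemma omegaTower_lt_eps0 (m : ℕ) : omegaTower m 1 < eps0 := by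
  induction m with
  | zero =>
    have : omegaTower 0 1 = (fun a : Ordinal.{0} => omega0 ^ a) 0 := by simp [omegaTower]
    rw [this]
    exact (apply_lt_nfp (isNormal_opow one_lt_omega0)).2
      (lt_of_lt_of_le (by simp) (iterate_le_nfp (fun a : Ordinal.{0} => omega0 ^ a) 0 1))
  | succ m ih => exact opow_lt_eps0 ih

lemma exists_lt_omegaTower {a : Ordinal.{0}} (h : a < eps0) : ∃ m, a < omegaTower m 1 := by
  obtain ⟨m, hm⟩ := lt_nfp_iff.1 h
  refine ⟨m, hm.trans_le ?_⟩
  clear hm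
  induction m with
  | zero => simp [omegaTower]
  | succ m ih =>
    rw [Function.iterate_succ_apply']
    exact opow_le_opow_right omega0_pos ih

/-- A nonzero ordinal splits off the last term of its Cantor normal form. -/
lemma exists_eq_opow_mul_add (a : Ordinal.{0}) (ha : a ≠ 0) :
    ∃ γ b : Ordinal.{0}, a = omega0 ^ γ * b + omega0 ^ γ := by
  induction a using WellFoundedLT.induction with
  | ind a ih =>
    set e := log omega0 a
    by_cases hr : a % omega0 ^ e = 0
    · obtain ⟨k, hk⟩ := lt_omega0.1 (div_opow_log_lt a one_lt_omega0)
      have hk0 : k ≠ 0 := by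
        rintro rfl
        have := div_opow_log_pos omega0 ha
        simp [hk] at this
      obtain ⟨j, rfl⟩ := Nat.exists_eq_succ_of_ne_zero hk0
      refine ⟨e, j, ?_⟩
      conv_lhs => rw [← div_add_mod a (omega0 ^ e), hr, hk]
      simp [mul_add_one]
    · have hlt := mod_opow_log_lt_self omega0 ha
      obtain ⟨γ, b, hb⟩ := ih _ hlt hr
      have h1 : omega0 ^ γ < omega0 ^ e := by
        refine lt_of_le_of_lt ?_ (mod_lt a (opow_ne_zero e omega0_ne_zero))
        rw [hb]
        exact le_add_self
      obtain ⟨c, hc⟩ := opow_dvd_opow omega0 ((opow_lt_opow_iff_right one_lt_omega0).1 h1).le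
      refine ⟨γ, c * (a / omega0 ^ e) + b, ?_⟩
      conv_lhs => rw [← div_add_mod a (omega0 ^ e), hb]
      rw [mul_add, ← mul_assoc, ← hc, add_assoc]

/-! ### Equations for the fundamental sequences -/

lemma fundSeq_zero (n : ℕ) : fundSeq 0 n = 0 := by rw [fundSeq]; simp

lemma fundSeq_add_one (b : Ordinal.{0}) (n : ℕ) : fundSeq (b + 1) n = b := by
  have hs : ∃ β : Ordinal.{0}, b + 1 = β + 1 := ⟨b, rfl⟩
  rw [fundSeq, dif_neg (by simp), dif_pos hs]
  exact (Order.add_one_inj.1 hs.choose_spec).symm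

lemma not_succ_of_opow {γ b : Ordinal.{0}} (h0 : γ ≠ 0) :
    ¬ ∃ β, omega0 ^ γ * b + omega0 ^ γ = β + 1 := by
  rintro ⟨β, hβ⟩
  have h1 : Order.IsSuccLimit (omega0 ^ γ * b + omega0 ^ γ) :=
    isSuccLimit_add _ (isSuccLimit_opow_left isSuccLimit_omega0 h0)
  rw [hβ, ← Order.succ_eq_add_one] at h1
  exact Order.not_isSuccLimit_succ _ h1

lemma opow_dvd_iff (γ b c : Ordinal.{0}) :
    omega0 ^ c ∣ omega0 ^ γ * b + omega0 ^ γ ↔ c ≤ γ := by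
  rw [← mul_add_one]
  constructor
  · intro h
    by_contra hn
    have h1 : omega0 ^ (γ + 1) ∣ omega0 ^ γ * (b + 1) :=
      (opow_dvd_opow _ (Order.add_one_le_of_lt (not_le.1 hn))).trans h
    rw [opow_add_one] at h1
    obtain ⟨d, hd⟩ := h1
    rw [mul_assoc] at hd
    have h2 : b + 1 = omega0 * d :=
      mul_left_cancel₀ (opow_ne_zero γ omega0_ne_zero) hd
    have h3 : Order.IsSuccPrelimit (b + 1) := isSuccPrelimit_iff_omega0_dvd.2 ⟨d, h2⟩
    rw [← Order.succ_eq_add_one] at h3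
    exact Order.not_isSuccPrelimit_succ _ h3
  · intro h
    exact Dvd.dvd.mul_right (opow_dvd_opow _ h) _

lemma sSup_opow_dvd (γ b : Ordinal.{0}) :
    sSup {c : Ordinal.{0} | omega0 ^ c ∣ omega0 ^ γ * b + omega0 ^ γ} = γ := by
  have : {c : Ordinal.{0} | omega0 ^ c ∣ omega0 ^ γ * b + omega0 ^ γ} = Set.Iic γ := by
    ext c; exact opow_dvd_iff γ b c
  rw [this, csSup_Iic]

lemma pred_div (γ b : Ordinal.{0}) :
    Ordinal.pred ((omega0 ^ γ * b + omega0 ^ γ) / omega0 ^ γ) = b := by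
  rw [← mul_add_one, mul_div_cancel _ (opow_ne_zero γ omega0_ne_zero), pred_add_one]

lemma fundSeq_opow_succ (δ b : Ordinal.{0}) (n : ℕ) :
    fundSeq (omega0 ^ (δ + 1) * b + omega0 ^ (δ + 1)) n =
      omega0 ^ (δ + 1) * b + omega0 ^ δ * ((n : Ordinal) + 1) := by
  have hs : ∃ β : Ordinal.{0}, δ + 1 = β + 1 := ⟨δ, rfl⟩
  have h0 : δ + 1 ≠ 0 := by simp
  rw [fundSeq, dif_neg (by simp), dif_neg (not_succ_of_opow h0)]
  simp only [sSup_opow_dvd, pred_div]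
  rw [dif_pos hs]
  rw [← Order.add_one_inj.1 (Classical.choose_spec hs)]

lemma limit_ne {a : Ordinal.{0}} (hl : Order.IsSuccLimit a) :
    a ≠ 0 ∧ ¬ ∃ β : Ordinal.{0}, a = β + 1 := by
  refine ⟨(isSuccLimit_iff.1 hl).1, ?_⟩
  rintro ⟨β, rfl⟩
  rw [← Order.succ_eq_add_one] at hl
  exact Order.not_isSuccLimit_succ _ hl

lemma fundSeq_opow_limit {γ : Ordinal.{0}} (b : Ordinal.{0}) (hl : Order.IsSuccLimit γ)
    (hγ : γ < eps0) (n : ℕ) :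
    fundSeq (omega0 ^ γ * b + omega0 ^ γ) n = omega0 ^ γ * b + omega0 ^ fundSeq γ n := by
  obtain ⟨h0, hs⟩ := limit_ne hl
  have hlt : γ < omega0 ^ γ * b + omega0 ^ γ := (lt_opow_self hγ).trans_le le_add_self
  rw [fundSeq, dif_neg (by simp), dif_neg (not_succ_of_opow h0)]
  simp only [sSup_opow_dvd, pred_div]
  rw [dif_neg hs, dif_pos hlt]

/-- The case of an empty initial part: `{ω ^ (δ + 1)}(n) = ω ^ δ * (n + 1)`. -/
lemma fundSeq_opow_succ' (δ : Ordinal.{0}) (n : ℕ) :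
    fundSeq (omega0 ^ (δ + 1)) n = omega0 ^ δ * ((n : Ordinal) + 1) := by
  simpa using fundSeq_opow_succ δ 0 n

lemma fundSeq_opow_limit' {γ : Ordinal.{0}} (hl : Order.IsSuccLimit γ) (hγ : γ < eps0) (n : ℕ) :
    fundSeq (omega0 ^ γ) n = omega0 ^ fundSeq γ n := by
  simpa using fundSeq_opow_limit 0 hl hγ n

lemma zero_succ_limit (a : Ordinal.{0}) : a = 0 ∨ (∃ b, a = b + 1) ∨ Order.IsSuccLimit a := by
  rcases zero_or_succ_or_isSuccLimit a with h | ⟨b, h⟩ | h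
  · exact Or.inl h
  · exact Or.inr (Or.inl ⟨b, by rw [← h, Order.succ_eq_add_one]⟩)
  · exact Or.inr (Or.inr h)

/-- The initial part of the Cantor normal form is not affected. -/
lemma fundSeq_opow (b : Ordinal.{0}) {γ : Ordinal.{0}} (hγ : γ < eps0) (n : ℕ) :
    fundSeq (omega0 ^ γ * b + omega0 ^ γ) n = omega0 ^ γ * b + fundSeq (omega0 ^ γ) n := by
  rcases zero_succ_limit γ with rfl | ⟨δ, rfl⟩ | hl
  · have h1 : fundSeq 1 n = 0 := by simpa using fundSeq_add_one 0 n
    simp [fundSeq_add_one, h1]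
  · rw [fundSeq_opow_succ, fundSeq_opow_succ']
  · rw [fundSeq_opow_limit b hl hγ, fundSeq_opow_limit' hl hγ]

/-- Every nonzero ordinal below `ε₀` is `ω ^ γ * b + ω ^ γ` with `γ < ε₀`. -/
lemma exists_cnf {a : Ordinal.{0}} (ha : a ≠ 0) (h : a < eps0) :
    ∃ γ b : Ordinal.{0}, γ < eps0 ∧ a = omega0 ^ γ * b + omega0 ^ γ := by
  obtain ⟨γ, b, rfl⟩ := exists_eq_opow_mul_add a ha
  exact ⟨γ, b, ((le_opow_self γ).trans le_add_self).trans_lt h, rfl⟩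

lemma fundSeq_lt {a : Ordinal.{0}} (ha : a ≠ 0) (h : a < eps0) (n : ℕ) : fundSeq a n < a := by
  induction a using WellFoundedLT.induction with
  | ind a ih =>
    obtain ⟨γ, b, hγ, rfl⟩ := exists_cnf ha h
    rw [fundSeq_opow b hγ]
    gcongr
    rcases zero_succ_limit γ with rfl | ⟨δ, rfl⟩ | hl
    · have h1 : fundSeq 1 n = 0 := by simpa using fundSeq_add_one 0 n
      simp [h1]
    · rw [fundSeq_opow_succ']
      exact opow_mul_lt_opow (by exact_mod_cast natCast_lt_omega0 (n + 1)) (lt_add_one δ)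
    · rw [fundSeq_opow_limit' hl hγ]
      exact (opow_lt_opow_iff_right one_lt_omega0).2
        (ih _ ((lt_opow_self hγ).trans_le le_add_self) (limit_ne hl).1 hγ)

lemma fundSeq_le {a : Ordinal.{0}} (h : a < eps0) (n : ℕ) : fundSeq a n ≤ a := by
  by_cases ha : a = 0
  · rw [ha, fundSeq_zero]
  · exact (fundSeq_lt ha h n).le

/-- The fundamental sequence of a limit ordinal below `ε₀` is cofinal in it. -/
lemma exists_lt_fundSeq {l a : Ordinal.{0}} (hl : Order.IsSuccLimit l) (h : l < eps0)
    (ha : a < l) : ∃ k, a < fundSeq l k := by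
  induction l using WellFoundedLT.induction generalizing a with
  | ind l ih =>
    obtain ⟨γ, b, hγ, rfl⟩ := exists_cnf (limit_ne hl).1 h
    have key : ∀ r < omega0 ^ γ, ∃ k, r < fundSeq (omega0 ^ γ) k := by
      intro r hr
      rcases zero_succ_limit γ with rfl | ⟨δ, rfl⟩ | hl'
      · rw [opow_zero, one_mul, ← Order.succ_eq_add_one] at hl
        exact absurd hl (Order.not_isSuccLimit_succ _)
      · rw [← Order.succ_eq_add_one] at hr
        obtain ⟨k, hk⟩ := lt_omega0_opow_succ.1 hr
        refine ⟨k, hk.trans_le ?_⟩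
        rw [fundSeq_opow_succ']
        gcongr
        exact le_self_add
      · obtain ⟨c, hc, hrc⟩ := (lt_opow_of_isSuccLimit omega0_ne_zero hl').1 hr
        obtain ⟨k, hk⟩ := ih γ ((lt_opow_self hγ).trans_le le_add_self) hl' hγ hc
        refine ⟨k, hrc.trans ?_⟩
        rw [fundSeq_opow_limit' hl' hγ]
        exact (opow_lt_opow_iff_right one_lt_omega0).2 hk
    rcases lt_or_ge a (omega0 ^ γ * b) with hab | hab
    · exact ⟨0, hab.trans_le (by rw [fundSeq_opow b hγ]; exact le_self_add)⟩
    · have hr : a - omega0 ^ γ * b < omega0 ^ γ := by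
        rwa [← add_lt_add_iff_left (omega0 ^ γ * b), Ordinal.add_sub_cancel_of_le hab]
      obtain ⟨k, hk⟩ := key _ hr
      refine ⟨k, ?_⟩
      rw [fundSeq_opow b hγ, ← Ordinal.add_sub_cancel_of_le hab]
      gcongr

/-! ### The step-down relation -/

lemma stepDown_refl (n : ℕ) (a : Ordinal.{0}) : stepDown n a a := Relation.ReflTransGen.refl

lemma stepDown_one (n : ℕ) (a : Ordinal.{0}) : stepDown n a (fundSeq a n) :=
  Relation.ReflTransGen.single rfl

lemma stepDown.trans {n : ℕ} {a b c : Ordinal.{0}} (h : stepDown n a b) (h' : stepDown n b c) :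
    stepDown n a c := Relation.ReflTransGen.trans h h'

lemma stepDown.le {n : ℕ} {a b : Ordinal.{0}} (h : stepDown n a b) (ha : a < eps0) : b ≤ a := by
  induction h with
  | refl => exact le_rfl
  | tail _ h2 ih =>
    subst h2
    exact (fundSeq_le (ih.trans_lt ha) n).trans ih

lemma stepDown_zero {a : Ordinal.{0}} (h : a < eps0) (n : ℕ) : stepDown n a 0 := by
  induction a using WellFoundedLT.induction with
  | ind a ih =>
    by_cases ha : a = 0
    · rw [ha]; exact stepDown_refl n 0
    · have := fundSeq_lt ha h n
      exact (stepDown_one n a).trans (ih _ this (this.trans h))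

/-- `Mesh a c` says that the Cantor normal form of `a + c` is the concatenation of those of
`a` and `c`: every power of `ω` up to `c` divides `a`. -/
def Mesh (a c : Ordinal.{0}) : Prop := ∀ γ : Ordinal.{0}, omega0 ^ γ ≤ c → omega0 ^ γ ∣ a

lemma Mesh.mono {a c d : Ordinal.{0}} (h : Mesh a c) (hd : d ≤ c) : Mesh a d :=
  fun γ hγ => h γ (hγ.trans hd)

lemma mesh_opow_mul {e b c : Ordinal.{0}} (hc : c ≤ omega0 ^ e) : Mesh (omega0 ^ e * b) c :=
  fun _ hγ => Dvd.dvd.mul_right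
    (opow_dvd_opow _ ((opow_le_opow_iff_right one_lt_omega0).1 (hγ.trans hc))) _

lemma mesh_opow {e c : Ordinal.{0}} (hc : c ≤ omega0 ^ e) : Mesh (omega0 ^ e) c := by
  simpa using mesh_opow_mul (b := 1) hc

lemma Mesh.fundSeq_add {a c : Ordinal.{0}} (h : Mesh a c) (hc0 : c ≠ 0) (hc : c < eps0)
    (n : ℕ) : fundSeq (a + c) n = a + fundSeq c n := by
  obtain ⟨γ, b, hγ, rfl⟩ := exists_cnf hc0 hc
  obtain ⟨d, rfl⟩ := h γ le_add_self
  rw [← add_assoc, ← mul_add, fundSeq_opow _ hγ, fundSeq_opow _ hγ, mul_add, add_assoc]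

lemma Mesh.stepDown_add {n : ℕ} {a c d : Ordinal.{0}} (h : Mesh a c) (hc : c < eps0)
    (hs : stepDown n c d) : stepDown n (a + c) (a + d) := by
  induction hs with
  | refl => exact stepDown_refl _ _
  | @tail x y h1 h2 ih =>
    subst h2
    have hx : x ≤ c := stepDown.le h1 hc
    by_cases hx0 : x = 0
    · rw [hx0, fundSeq_zero, ← hx0]; exact ih
    · rw [← (h.mono hx).fundSeq_add hx0 (hx.trans_lt hc)]
      exact ih.trans (stepDown_one _ _)

lemma stepDown_opow_mul {n k l : ℕ} {δ : Ordinal.{0}} (h : δ < eps0) (hkl : k ≤ l) :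
    stepDown n (omega0 ^ δ * (l : Ordinal)) (omega0 ^ δ * (k : Ordinal)) := by
  induction l, hkl using Nat.le_induction with
  | base => exact stepDown_refl _ _
  | succ l _ ih =>
    refine stepDown.trans ?_ ih
    have := (mesh_opow_mul (b := (l : Ordinal)) (le_refl (omega0 ^ δ))).stepDown_add
      (opow_lt_eps0 h) (stepDown_zero (opow_lt_eps0 h) n)
    rw [add_zero] at this
    rwa [Nat.cast_succ, mul_add_one]

/-- `ω ^ (δ + 1)` steps down to every multiple `ω ^ δ * k` with `k ≤ n + 1`. -/
lemma stepDown_opow_succ {n k : ℕ} {δ : Ordinal.{0}} (h : δ < eps0) (hk : k ≤ n + 1) :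
    stepDown n (omega0 ^ (δ + 1)) (omega0 ^ δ * (k : Ordinal)) := by
  have h1 := stepDown_one n (omega0 ^ (δ + 1))
  rw [fundSeq_opow_succ'] at h1
  have h2 := stepDown_opow_mul (n := n) h hk
  rw [Nat.cast_succ] at h2
  exact h1.trans h2

lemma stepDown.opow {n : ℕ} {a b : Ordinal.{0}} (h : stepDown n a b) (ha : a < eps0) :
    stepDown n (omega0 ^ a) (omega0 ^ b) := by
  induction h with
  | refl => exact stepDown_refl _ _
  | @tail x y h1 h2 ih =>
    subst h2
    have hx : x < eps0 := (stepDown.le h1 ha).trans_lt ha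
    refine ih.trans ?_
    rcases zero_succ_limit x with rfl | ⟨δ, rfl⟩ | hl
    · rw [fundSeq_zero]; exact stepDown_refl _ _
    · rw [fundSeq_add_one]
      simpa using stepDown_opow_succ (k := 1) ((lt_add_one δ).trans hx) (Nat.le_add_left 1 n)
    · rw [← fundSeq_opow_limit' hl hx]
      exact stepDown_one _ _

/-- Bachmann property: successive members of a fundamental sequence are related by `→_n`. -/
lemma stepDown_fundSeq_succ {a : Ordinal.{0}} (h : a < eps0) (n x : ℕ) :
    stepDown n (fundSeq a (x + 1)) (fundSeq a x) := by
  induction a using WellFoundedLT.induction with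
  | ind a ih =>
    by_cases ha : a = 0
    · rw [ha, fundSeq_zero, fundSeq_zero]; exact stepDown_refl _ _
    obtain ⟨γ, b, hγ, rfl⟩ := exists_cnf ha h
    rw [fundSeq_opow b hγ, fundSeq_opow b hγ]
    have hle := fundSeq_le (opow_lt_eps0 hγ) (x + 1)
    refine (mesh_opow_mul hle).stepDown_add (hle.trans_lt (opow_lt_eps0 hγ)) ?_
    rcases zero_succ_limit γ with rfl | ⟨δ, rfl⟩ | hl
    · have h1 : ∀ m, fundSeq 1 m = 0 := fun m => by simpa using fundSeq_add_one 0 m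
      rw [opow_zero, h1, h1]; exact stepDown_refl _ _
    · rw [fundSeq_opow_succ', fundSeq_opow_succ']
      exact_mod_cast stepDown_opow_mul (n := n) ((lt_add_one δ).trans hγ) (Nat.le_succ (x + 1))
    · rw [fundSeq_opow_limit' hl hγ, fundSeq_opow_limit' hl hγ]
      exact (ih γ ((lt_opow_self hγ).trans_le le_add_self) hγ).opow
        ((fundSeq_le hγ _).trans_lt hγ)

lemma stepDown_fundSeq {a : Ordinal.{0}} (h : a < eps0) (n : ℕ) {k l : ℕ} (hkl : k ≤ l) :
    stepDown n (fundSeq a l) (fundSeq a k) := by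
  induction l, hkl using Nat.le_induction with
  | base => exact stepDown_refl _ _
  | succ l _ ih => exact (stepDown_fundSeq_succ h n l).trans ih

/-- If `a < b < ε₀`, then `b →_n a` for all large `n`. -/
lemma exists_stepDown {a b : Ordinal.{0}} (hb : b < eps0) (hab : a < b) :
    ∃ N, ∀ n, N ≤ n → stepDown n b a := by
  induction b using WellFoundedLT.induction with
  | ind b ih =>
    have aux : ∀ c, c < b → a ≤ c → ∃ N, ∀ n, N ≤ n → stepDown n c a := by
      intro c hc hac
      rcases hac.eq_or_lt with rfl | hac
      · exact ⟨0, fun n _ => stepDown_refl _ _⟩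
      · exact ih c hc (hc.trans hb) hac
    rcases zero_succ_limit b with rfl | ⟨c, rfl⟩ | hl
    · exact absurd hab not_lt_zero
    · obtain ⟨N, hN⟩ := aux c (lt_add_one c) (Order.le_of_lt_add_one hab)
      refine ⟨N, fun n hn => stepDown.trans ?_ (hN n hn)⟩
      simpa [fundSeq_add_one] using stepDown_one n (c + 1)
    · obtain ⟨k, hk⟩ := exists_lt_fundSeq hl hb hab
      obtain ⟨N, hN⟩ := aux _ (fundSeq_lt (limit_ne hl).1 hb k) hk.le
      refine ⟨max N k, fun n hn => ?_⟩
      exact ((stepDown_one n b).trans (stepDown_fundSeq hb n ((le_max_right _ _).trans hn))).trans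
        (hN n ((le_max_left _ _).trans hn))

lemma stepDown_omegaTower_succ (n m : ℕ) :
    stepDown n (omegaTower (m + 1) 1) (omegaTower m 1) := by
  have h1 : (1 : Ordinal.{0}) < eps0 := omegaTower_lt_eps0 0
  induction m with
  | zero => simpa [omegaTower] using (stepDown_zero h1 n).opow h1
  | succ m ih => exact ih.opow (omegaTower_lt_eps0 _)

lemma stepDown_omegaTower (n : ℕ) {k m : ℕ} (h : k ≤ m) :
    stepDown n (omegaTower m 1) (omegaTower k 1) := by
  induction m, h using Nat.le_induction with
  | base => exact stepDown_refl _ _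
  | succ m _ ih => exact (stepDown_omegaTower_succ n m).trans ih

lemma mesh_omegaTower {m : ℕ} {c : Ordinal.{0}} (h : c ≤ omegaTower m 1) :
    Mesh (omegaTower m 1) c := by
  cases m with
  | zero => simpa [omegaTower] using mesh_opow (e := 0) (by simpa [omegaTower] using h)
  | succ m => exact mesh_opow h

/-- For `n ≥ 1`, `ω_{m+1} →_n ω_m + ω_m`. -/
lemma stepDown_omegaTower_add_self {n : ℕ} (hn : 1 ≤ n) (m : ℕ) :
    stepDown n (omegaTower (m + 1) 1) (omegaTower m 1 + omegaTower m 1) := by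
  have two : ∀ a : Ordinal.{0}, a * ((2 : ℕ) : Ordinal) = a + a := fun a => by
    rw [Nat.cast_ofNat, ← one_add_one_eq_two, mul_add, mul_one]
  induction m with
  | zero =>
    have h0 : (0 : Ordinal.{0}) < eps0 := zero_le.trans_lt (omegaTower_lt_eps0 0)
    have := stepDown_opow_succ (n := n) (k := 2) h0 (by omega)
    rw [two] at this
    simpa [omegaTower] using this
  | succ m ih =>
    have h1 : stepDown n (omegaTower (m + 1) 1) (omegaTower m 1 + 1) :=
      ih.trans ((mesh_omegaTower le_rfl).stepDown_add (omegaTower_lt_eps0 m)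
        (stepDown_omegaTower n (Nat.zero_le m)))
    have h2 := stepDown_opow_succ (n := n) (k := 2) (omegaTower_lt_eps0 m) (by omega)
    rw [two] at h2
    exact (h1.opow (omegaTower_lt_eps0 _)).trans h2

/-- For all large `n`, `ω_{n+1} →_n ω_n + a`. -/
lemma exists_stepDown_omegaTower_add {a : Ordinal.{0}} (ha : a < eps0) :
    ∃ N, ∀ n, N ≤ n → stepDown n (omegaTower (n + 1) 1) (omegaTower n 1 + a) := by
  obtain ⟨m, hm⟩ := exists_lt_omegaTower ha
  obtain ⟨N, hN⟩ := exists_stepDown (omegaTower_lt_eps0 m) hm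
  refine ⟨max N (max m 1), fun n hn => ?_⟩
  simp only [max_le_iff] at hn
  refine (stepDown_omegaTower_add_self hn.2.2 n).trans
    ((mesh_omegaTower le_rfl).stepDown_add (omegaTower_lt_eps0 n) ?_)
  exact (stepDown_omegaTower n hn.2.1).trans (hN n hn.1)

/-! ### Monotonicity of the fast-growing hierarchy -/

lemma fgh_zero (x : ℕ) : fgh 0 x = x + 1 := by rw [fgh]; simp

lemma fgh_add_one (b : Ordinal.{0}) (x : ℕ) : fgh (b + 1) x = (fgh b)^[x + 1] x := by
  have hs : ∃ β : Ordinal.{0}, b + 1 = β + 1 := ⟨b, rfl⟩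
  rw [fgh, dif_neg (by simp), dif_pos hs, ← Order.add_one_inj.1 (Classical.choose_spec hs)]

lemma fgh_limit {a : Ordinal.{0}} (hl : Order.IsSuccLimit a) (h : a < eps0) (x : ℕ) :
    fgh a x = fgh (fundSeq a x) x := by
  conv_lhs => rw [fgh]
  rw [dif_neg (limit_ne hl).1, dif_neg (limit_ne hl).2, dif_pos (fundSeq_lt (limit_ne hl).1 h x)]

lemma slowF_zero : slowF 0 = slowFeps0 := by rw [slowF]; simp

lemma slowF_add_one (b : Ordinal.{0}) (x : ℕ) : slowF (b + 1) x = (slowF b)^[x + 1] x := by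
  have hs : ∃ β : Ordinal.{0}, b + 1 = β + 1 := ⟨b, rfl⟩
  rw [slowF, dif_neg (by simp), dif_pos hs, ← Order.add_one_inj.1 (Classical.choose_spec hs)]

lemma slowF_limit {a : Ordinal.{0}} (hl : Order.IsSuccLimit a) (h : a < eps0) (x : ℕ) :
    slowF a x = slowF (fundSeq a x) x := by
  conv_lhs => rw [slowF]
  rw [dif_neg (limit_ne hl).1, dif_neg (limit_ne hl).2, dif_pos (fundSeq_lt (limit_ne hl).1 h x)]

lemma lt_fgh {a : Ordinal.{0}} (h : a < eps0) (x : ℕ) : x < fgh a x := by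
  induction a using WellFoundedLT.induction generalizing x with
  | ind a ih =>
    rcases zero_succ_limit a with rfl | ⟨b, rfl⟩ | hl
    · rw [fgh_zero]; omega
    · rw [fgh_add_one, Function.iterate_succ_apply']
      have hb := ih b (lt_add_one b) ((lt_add_one b).trans h)
      exact (Function.id_le_iterate_of_id_le (fun y => (hb y).le) x x).trans_lt (hb _)
    · have := fundSeq_lt (limit_ne hl).1 h x
      rw [fgh_limit hl h]
      exact ih _ this (this.trans h) x

/-- `a →_n b` gives `F_b(n) ≤ F_a(n)`. -/
lemma fgh_le_of_stepDown {n : ℕ} {a b : Ordinal.{0}} (hs : stepDown n a b) (ha : a < eps0) :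
    fgh b n ≤ fgh a n := by
  induction hs with
  | refl => exact le_rfl
  | @tail x y h1 h2 ih =>
    subst h2
    have hx : x < eps0 := (stepDown.le h1 ha).trans_lt ha
    refine le_trans ?_ ih
    rcases zero_succ_limit x with rfl | ⟨δ, rfl⟩ | hl
    · rw [fundSeq_zero]
    · rw [fundSeq_add_one, fgh_add_one, Function.iterate_succ_apply]
      exact Function.id_le_iterate_of_id_le
        (fun y => (lt_fgh ((lt_add_one δ).trans hx) y).le) n _
    · rw [fgh_limit hl hx]

lemma fgh_mono {a : Ordinal.{0}} (h : a < eps0) : Monotone (fgh a) := by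
  induction a using WellFoundedLT.induction with
  | ind a ih =>
    refine monotone_nat_of_le_succ fun x => ?_
    rcases zero_succ_limit a with rfl | ⟨b, rfl⟩ | hl
    · rw [fgh_zero, fgh_zero]; omega
    · have hb := (lt_add_one b).trans h
      rw [fgh_add_one, fgh_add_one, Function.iterate_succ_apply' _ (x + 1)]
      exact ((ih b (lt_add_one b) hb).iterate (x + 1) (Nat.le_succ x)).trans (lt_fgh hb _).le
    · have hlt := fundSeq_lt (limit_ne hl).1 h
      rw [fgh_limit hl h, fgh_limit hl h]
      exact (ih _ (hlt x) ((hlt x).trans h) (Nat.le_succ x)).trans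
        (fgh_le_of_stepDown (stepDown_fundSeq_succ h (x + 1) x) ((hlt _).trans h))

lemma fgh_omegaTower_le (x : ℕ) {k m : ℕ} (h : k ≤ m) :
    fgh (omegaTower k 1) x ≤ fgh (omegaTower m 1) x :=
  fgh_le_of_stepDown (stepDown_omegaTower x h) (omegaTower_lt_eps0 m)

lemma Feps0_mono : Monotone Feps0 := by
  refine monotone_nat_of_le_succ fun x => ?_
  exact (fgh_omegaTower_le x (Nat.le_succ (x + 1))).trans
    (fgh_mono (omegaTower_lt_eps0 _) (Nat.le_succ x))

/-! ### Comparing the slow hierarchy with the fast-growing one -/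

lemma Feps0Inv_lt {n x : ℕ} (hn : 1 ≤ n) (hx : x < Feps0 n) : Feps0Inv x + 1 ≤ n := by
  have : Feps0Inv x ≤ n - 1 := by
    refine csSup_le' ?_
    rintro z (⟨-, hz⟩ | hz)
    · have := Feps0_mono.reflect_lt (hz.trans_lt hx)
      omega
    · rw [Set.mem_singleton_iff.1 hz]; exact Nat.zero_le _
  omega

/-- As long as `F_{ω_n + a}(x)` does not exceed `F_{ε₀}(n)`, no argument of `F^⋄_{ε₀}` arising in
the evaluation of `F^⋄_{ε₀+a}(x)` reaches `F_{ε₀}(n)`, so that `F^⋄_{ε₀}` is bounded by `F_{ω_n}`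
throughout. -/
lemma slowF_le {n : ℕ} (hn : 1 ≤ n) {a : Ordinal.{0}} (ha : a < eps0)
    (hm : a ≤ omegaTower n 1) (x : ℕ) (hx : fgh (omegaTower n 1 + a) x ≤ Feps0 n) :
    slowF a x ≤ fgh (omegaTower n 1 + a) x := by
  have hw := omegaTower_lt_eps0 n
  induction a using WellFoundedLT.induction generalizing x with
  | ind a ih =>
    rcases zero_succ_limit a with rfl | ⟨b, rfl⟩ | hl
    · rw [add_zero] at hx ⊢
      rw [slowF_zero]
      exact fgh_omegaTower_le x (Feps0Inv_lt hn ((lt_fgh hw x).trans_le hx))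
    · have hb : b < eps0 := (lt_add_one b).trans ha
      have hwb := add_lt_eps0 hw hb
      rw [← add_assoc, fgh_add_one] at hx ⊢
      rw [slowF_add_one]
      set g := fgh (omegaTower n 1 + b)
      have key : ∀ k, k ≤ x + 1 → (slowF b)^[k] x ≤ g^[k] x := by
        intro k hk
        induction k with
        | zero => exact le_rfl
        | succ k ihk =>
          have h1 : g ((slowF b)^[k] x) ≤ g^[k + 1] x := by
            rw [Function.iterate_succ_apply']
            exact fgh_mono hwb (ihk (by omega))
          have h2 : g^[k + 1] x ≤ g^[x + 1] x :=
            Function.monotone_iterate_of_id_le (fun y => (lt_fgh hwb y).le) hk x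
          rw [Function.iterate_succ_apply']
          exact (ih b (lt_add_one b) hb ((lt_add_one b).le.trans hm) _
            ((h1.trans h2).trans hx)).trans h1
      exact key _ le_rfl
    · have hlt := fundSeq_lt (limit_ne hl).1 ha x
      rw [fgh_limit (isSuccLimit_add _ hl) (add_lt_eps0 hw ha),
        (mesh_omegaTower hm).fundSeq_add (limit_ne hl).1 ha] at hx ⊢
      rw [slowF_limit hl ha]
      exact ih _ hlt (hlt.trans ha) (hlt.le.trans hm) x hx

/-! ### Iterating the slow hierarchy at `F_{ε₀}(n - 1)` -/

/-- For each ordinal `α < ε₀` there is `N` such that for all `n ≥ N`,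
`F^⋄_{ε₀+α}(F_{ε₀}(n ∸ 1)) ≤ F_{ε₀}(n)`. -/
theorem stmt6 : ∀ α : Ordinal.{0}, α < eps0 →
    ∃ N : ℕ, ∀ n : ℕ, N ≤ n → slowF α (Feps0 (n - 1)) ≤ Feps0 n := by
  intro α hα
  have hα1 : α + 1 < eps0 := add_lt_eps0 hα (omegaTower_lt_eps0 0)
  obtain ⟨N, hN⟩ := exists_stepDown_omegaTower_add hα1
  obtain ⟨m, hm⟩ := exists_lt_omegaTower hα
  refine ⟨max N (max m 1), fun n hn => ?_⟩
  simp only [max_le_iff] at hn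
  obtain ⟨hn1, hn2, hn3⟩ := hn
  have hw := omegaTower_lt_eps0 n
  have hwα := add_lt_eps0 hw hα
  have hαn : α ≤ omegaTower n 1 :=
    hm.le.trans (stepDown.le (stepDown_omegaTower 0 hn2) hw)
  have h1 : Feps0 (n - 1) ≤ fgh (omegaTower n 1 + α) n := by
    have h2 : Feps0 (n - 1) = fgh (omegaTower n 1) (n - 1) := by
      rw [Feps0, Nat.sub_add_cancel hn3]
    have h3 := fgh_le_of_stepDown ((mesh_omegaTower hαn).stepDown_add hα (stepDown_zero hα n)) hwα
    rw [add_zero] at h3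
    rw [h2]
    exact (fgh_mono hw (Nat.sub_le n 1)).trans h3
  have h4 : fgh (omegaTower n 1 + α) (Feps0 (n - 1)) ≤ Feps0 n := by
    refine (fgh_mono hwα h1).trans ?_
    -- Two of the `n + 1` iterations in `F_{ω_n + α + 1}(n)` suffice, as `n ≥ 1`.
    have h5 : (fgh (omegaTower n 1 + α))^[2] n ≤ fgh (omegaTower n 1 + (α + 1)) n := by
      rw [← add_assoc, fgh_add_one]
      exact Function.monotone_iterate_of_id_le (fun y => (lt_fgh hwα y).le) (by omega) n
    exact h5.trans (fgh_le_of_stepDown (hN n hn1) (omegaTower_lt_eps0 _))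
  exact (slowF_le hn3 hα hαn _ h4).trans h4

end
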